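/- arXiv:quant-ph/0407217 — 6 statements merged into one kernel-verified Lean document; each statement's English description precedes it below -/
import Mathlib

section
/- The set V₀ has exactly C(N, k−1) · k! elements, where C(N, k−1) is the binomial coefficient and k! is the factorial of k. -/
open Classical in
noncomputable def V0mk {N k : ℕ} {B : Type} [Zero B] (y : Fin k → B)
    (p : Σ j : Fin k, ({i : Fin k // i ≠ j} ↪ Fin N)) : Fin N → B :=
  fun x => if h : ∃ i, p.2 i = x then y (Classical.choose h).1 else 0

theorem V0mk_iff {N k : ℕ} {B : Type} [Zero B] (y : Fin k → B)
    (hy : Function.Injective y) (hy0 : ∀ i, y i ≠ 0)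
    (j : Fin k) (e : {i : Fin k // i ≠ j} ↪ Fin N) (x : Fin N) (i : Fin k) :
    V0mk y ⟨j, e⟩ x = y i ↔ ∃ h : i ≠ j, e ⟨i, h⟩ = x := by
  unfold V0mk
  constructor
  · intro h
    split_ifs at h with h1
    · have h2 := Classical.choose_spec h1
      have h3 := hy h
      subst h3
      exact ⟨(Classical.choose h1).2, h2⟩
    · exact absurd h.symm (hy0 i)
  · rintro ⟨h, hx⟩
    have h1 : ∃ i, e i = x := ⟨_, hx⟩
    rw [dif_pos h1]
    have h2 := Classical.choose_spec h1
    have h3 := e.injective (h2.trans hx.symm)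
    exact congrArg (fun z => y z.1) h3

theorem V0mk_zero {N k : ℕ} {B : Type} [Zero B] (y : Fin k → B)
    (j : Fin k) (e : {i : Fin k // i ≠ j} ↪ Fin N) (x : Fin N)
    (h : ∀ i, V0mk y ⟨j, e⟩ x ≠ y i) : V0mk y ⟨j, e⟩ x = 0 := by
  unfold V0mk at *
  split_ifs with h1
  · exact absurd (dif_pos h1) (h _)
  · rfl

/-- The set V₀ (databases containing exactly k-1 of the k distinct nonzero
items `y i`, with all other addresses holding 0) has exactly
C(N, k-1) · k! elements. -/
theorem V0_card (N k : ℕ) (hN : 0 < N) (hk : 0 < k) (hkN : k ≤ N)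
    (B : Type) [Fintype B] [DecidableEq B] [Zero B]
    (y : Fin k → B) (hy : Function.Injective y) (hy0 : ∀ i, y i ≠ 0) :
    {f : Fin N → B |
        ∃ j : Fin k,
          (∀ i : Fin k, i ≠ j → ∃! x : Fin N, f x = y i) ∧
          (∀ x : Fin N, f x ≠ y j) ∧
          (∀ x : Fin N, (∀ i : Fin k, f x ≠ y i) → f x = 0)}.ncard
      = N.choose (k - 1) * Nat.factorial k := by
  have hinj : Function.Injective (V0mk (N := N) y) := by
    rintro ⟨j, e⟩ ⟨j', e'⟩ h
    have hj : j = j' := by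
      by_contra hne
      have h1 := (V0mk_iff y hy hy0 j' e' (e' ⟨j, hne⟩) j).2 ⟨hne, rfl⟩
      rw [← h] at h1
      obtain ⟨h2, _⟩ := (V0mk_iff y hy hy0 _ _ _ _).1 h1
      exact h2 rfl
    subst hj
    congr 1
    ext1 ⟨i, hi⟩
    have h1 := (V0mk_iff y hy hy0 j e' (e' ⟨i, hi⟩) i).2 ⟨hi, rfl⟩
    rw [← h] at h1
    obtain ⟨_, h2⟩ := (V0mk_iff y hy hy0 _ _ _ _).1 h1
    exact h2
  have hset : {f : Fin N → B |
        ∃ j : Fin k,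
          (∀ i : Fin k, i ≠ j → ∃! x : Fin N, f x = y i) ∧
          (∀ x : Fin N, f x ≠ y j) ∧
          (∀ x : Fin N, (∀ i : Fin k, f x ≠ y i) → f x = 0)} =
      Set.range (V0mk (N := N) y) := by
    ext f
    constructor
    · rintro ⟨j, h1, h2, h3⟩
      choose g hg hu using h1
      let e : {i : Fin k // i ≠ j} ↪ Fin N := ⟨fun i => g i.1 i.2, by
        rintro ⟨a, ha⟩ ⟨b, hb⟩ hab
        apply Subtype.ext
        apply hy
        have := hg a ha
        have h' := hg b hb
        simp only at hab this h'
        rw [← this, ← h', hab]⟩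
      refine ⟨⟨j, e⟩, ?_⟩
      funext x
      by_cases hx : ∃ i, f x = y i
      · obtain ⟨i, hi⟩ := hx
        have hij : i ≠ j := by
          rintro rfl
          exact h2 x hi
        rw [hi]
        exact (V0mk_iff y hy hy0 j e x i).2 ⟨hij, (hu i hij x hi).symm⟩
      · push Not at hx
        rw [h3 x hx]
        apply V0mk_zero
        intro i hi
        obtain ⟨hij, rfl⟩ := (V0mk_iff y hy hy0 j e x i).1 hi
        exact hx i (hg i hij)
    · rintro ⟨⟨j, e⟩, rfl⟩
      refine ⟨j, ?_, ?_, V0mk_zero y j e⟩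
      · intro i hi
        refine ⟨e ⟨i, hi⟩, (V0mk_iff y hy hy0 j e _ i).2 ⟨hi, rfl⟩, ?_⟩
        intro x hx
        obtain ⟨_, h⟩ := (V0mk_iff y hy hy0 j e x i).1 hx
        exact h.symm
      · intro x hx
        obtain ⟨h, _⟩ := (V0mk_iff y hy hy0 j e x j).1 hx
        exact h rfl
  rw [hset, ← Set.image_univ, Set.ncard_image_of_injective _ hinj, Set.ncard_univ,
    Nat.card_eq_fintype_card, Fintype.card_sigma]
  have hc : ∀ j : Fin k, Fintype.card ({i : Fin k // i ≠ j} ↪ Fin N)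
      = N.descFactorial (k - 1) := by
    intro j
    rw [Fintype.card_embedding_eq]
    simp [Fintype.card_subtype_compl]
  simp only [hc, Finset.sum_const, Finset.card_univ, Fintype.card_fin, smul_eq_mul]
  obtain ⟨m, rfl⟩ : ∃ m, k = m + 1 := ⟨k - 1, by omega⟩
  rw [Nat.add_sub_cancel, Nat.descFactorial_eq_factorial_mul_choose, Nat.factorial_succ]
  ring
end

section
/- Every f₀ ∈ V₀ is adjacent to exactly N − k + 1 functions f₁ ∈ V₁ (i.e., the minimum degree Δ₀ of a vertex of V₀ in the bipartite adjacency graph between V₀ and V₁ equals N − k + 1). -/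
/-- Every f₀ ∈ V₀ is adjacent (differs at exactly one address) to exactly
N - k + 1 functions f₁ ∈ V₁. -/
theorem degree_V0 (N k : ℕ) (hN : 0 < N) (hk : 0 < k) (hkN : k ≤ N)
    (B : Type) [Fintype B] [DecidableEq B] [Zero B]
    (y : Fin k → B) (hy : Function.Injective y) (hy0 : ∀ i, y i ≠ 0)
    (f₀ : Fin N → B)
    (hf₀ : ∃ j : Fin k,
        (∀ i : Fin k, i ≠ j → ∃! x : Fin N, f₀ x = y i) ∧
        (∀ x : Fin N, f₀ x ≠ y j) ∧
        (∀ x : Fin N, (∀ i : Fin k, f₀ x ≠ y i) → f₀ x = 0)) :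
    {f₁ : Fin N → B |
        ((∀ i : Fin k, ∃! x : Fin N, f₁ x = y i) ∧
          (∀ x : Fin N, (∀ i : Fin k, f₁ x ≠ y i) → f₁ x = 0)) ∧
        (∃! x : Fin N, f₀ x ≠ f₁ x)}.ncard = N - k + 1 := by
  obtain ⟨j, h1, h2, h3⟩ := hf₀
  have hset : {f₁ : Fin N → B |
        ((∀ i : Fin k, ∃! x : Fin N, f₁ x = y i) ∧
          (∀ x : Fin N, (∀ i : Fin k, f₁ x ≠ y i) → f₁ x = 0)) ∧
        (∃! x : Fin N, f₀ x ≠ f₁ x)} =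
      (fun x => Function.update f₀ x (y j)) ''
        ((Finset.univ.filter (fun x => f₀ x = 0) : Finset (Fin N)) : Set (Fin N)) := by
    ext f₁
    simp only [Set.mem_setOf_eq, Set.mem_image, Finset.coe_filter, Finset.mem_univ, true_and]
    constructor
    · rintro ⟨⟨ha, hb⟩, x, hx, hux⟩
      have heq : ∀ z, z ≠ x → f₀ z = f₁ z := by
        intro z hz
        by_contra h
        exact hz (hux z h)
      have hxj : f₁ x = y j := by
        obtain ⟨z, hz, -⟩ := ha j
        by_cases hzx : z = x
        · rw [← hzx]; exact hz
        · exact absurd ((heq z hzx).trans hz) (h2 z)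
      refine ⟨x, ?_, ?_⟩
      · apply h3
        intro i hi
        have hij : i ≠ j := by
          rintro rfl
          exact h2 x hi
        obtain ⟨z, hz, -⟩ := ha i
        by_cases hzx : z = x
        · rw [hzx, hxj] at hz
          exact hij (hy hz).symm
        · exact hzx ((h1 i hij).unique ((heq z hzx).trans hz) hi)
      · funext z
        by_cases hzx : z = x
        · subst hzx; simp [hxj]
        · simp [hzx, heq z hzx]
    · rintro ⟨x, hx, rfl⟩
      refine ⟨⟨?_, ?_⟩, x, ?_, ?_⟩
      · intro i
        by_cases hij : i = j
        · subst hij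
          refine ⟨x, by simp, ?_⟩
          intro z hz
          by_contra hzx
          simp only [Function.update_of_ne hzx] at hz
          exact h2 z hz
        · obtain ⟨z, hz, hu⟩ := h1 i hij
          have hzx : z ≠ x := by
            rintro rfl
            exact hy0 i (hz.symm.trans hx)
          refine ⟨z, by simpa [Function.update_of_ne hzx] using hz, ?_⟩
          intro w hw
          by_cases hwx : w = x
          · subst hwx
            simp only [Function.update_self] at hw
            exact absurd (hy hw).symm hij
          · simp only [Function.update_of_ne hwx] at hw
            exact hu w hw
      · intro z hz
        by_cases hzx : z = x
        · subst hzx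
          exact absurd (by simp) (hz j)
        · simp only [Function.update_of_ne hzx] at hz ⊢
          exact h3 z hz
      · simp only [Function.update_self]
        exact h2 x
      · intro z hz
        by_contra hzx
        simp [Function.update_of_ne hzx] at hz
  rw [hset, Set.ncard_image_of_injective, Set.ncard_coe_finset]
  · have hc : (Finset.univ.filter (fun x => ¬ f₀ x = 0)).card
        = (Finset.univ.erase j).card := by
      symm
      refine Finset.card_bij (fun i hi => (h1 i (Finset.ne_of_mem_erase hi)).choose) ?_ ?_ ?_
      · intro i hi
        have := (h1 i (Finset.ne_of_mem_erase hi)).choose_spec.1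
        simp only [Finset.mem_filter, Finset.mem_univ, true_and]
        intro h
        exact hy0 i (this.symm.trans h)
      · intro a ha b hb hab
        have e1 := (h1 a (Finset.ne_of_mem_erase ha)).choose_spec.1
        have e2 := (h1 b (Finset.ne_of_mem_erase hb)).choose_spec.1
        simp only at hab e1 e2
        rw [hab] at e1
        exact hy (e1.symm.trans e2)
      · intro x hx
        have hx0 : f₀ x ≠ 0 := by simpa using hx
        have : ∃ i, f₀ x = y i := by
          by_contra h
          exact hx0 (h3 x (fun i hi => h ⟨i, hi⟩))
        obtain ⟨i, hi⟩ := this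
        have hij : i ≠ j := by
          rintro rfl
          exact h2 x hi
        exact ⟨i, by simp [hij], (h1 i hij).unique (h1 i hij).choose_spec.1 hi⟩
    have hs := Finset.card_filter_add_card_filter_not
      (s := (Finset.univ : Finset (Fin N))) (fun x => f₀ x = 0)
    rw [hc, Finset.card_erase_of_mem (Finset.mem_univ j)] at hs
    simp only [Finset.card_univ, Fintype.card_fin] at hs
    omega
  · intro a b hab
    by_contra hne
    have := congrFun hab a
    simp only [Function.update_self, Function.update_of_ne hne] at this
    exact h2 a this.symm
end

section
/- Every f₁ ∈ V₁ is adjacent to exactly k functions f₀ ∈ V₀ (i.e., the minimum degree Δ₁ of a vertex of V₁ in the bipartite adjacency graph between V₀ and V₁ equals k). -/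
/-- Every f₁ ∈ V₁ is adjacent (differs at exactly one address) to exactly
k functions f₀ ∈ V₀. -/
theorem degree_V1 (N k : ℕ) (hN : 0 < N) (hk : 0 < k) (hkN : k ≤ N)
    (B : Type) [Fintype B] [DecidableEq B] [Zero B]
    (y : Fin k → B) (hy : Function.Injective y) (hy0 : ∀ i, y i ≠ 0)
    (f₁ : Fin N → B)
    (hf₁ : (∀ i : Fin k, ∃! x : Fin N, f₁ x = y i) ∧
        (∀ x : Fin N, (∀ i : Fin k, f₁ x ≠ y i) → f₁ x = 0)) :
    {f₀ : Fin N → B |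
        (∃ j : Fin k,
          (∀ i : Fin k, i ≠ j → ∃! x : Fin N, f₀ x = y i) ∧
          (∀ x : Fin N, f₀ x ≠ y j) ∧
          (∀ x : Fin N, (∀ i : Fin k, f₀ x ≠ y i) → f₀ x = 0)) ∧
        (∃! x : Fin N, f₀ x ≠ f₁ x)}.ncard = k := by
  obtain ⟨h1, h2⟩ := hf₁
  choose a ha hu using h1
  simp only at ha hu
  have hinj : Function.Injective (fun i => Function.update f₁ (a i) 0) := by
    intro i j hij
    by_contra hne
    have h := congrFun hij (a i)
    have hne' : a i ≠ a j := by
      intro h'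
      apply hne
      apply hy
      rw [← ha i, ← ha j, h']
    simp only [Function.update_self, Function.update_of_ne hne', ha] at h
    exact hy0 i h.symm
  have hset : {f₀ : Fin N → B |
        (∃ j : Fin k,
          (∀ i : Fin k, i ≠ j → ∃! x : Fin N, f₀ x = y i) ∧
          (∀ x : Fin N, f₀ x ≠ y j) ∧
          (∀ x : Fin N, (∀ i : Fin k, f₀ x ≠ y i) → f₀ x = 0)) ∧
        (∃! x : Fin N, f₀ x ≠ f₁ x)} = Set.range (fun i => Function.update f₁ (a i) 0) := by
    ext f
    simp only [Set.mem_ofPred_eq, Set.mem_range]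
    constructor
    · rintro ⟨⟨j, hj1, hj2, hj3⟩, x, hx, hxu⟩
      have hxa : a j = x := hxu _ (by simp only [ha]; exact hj2 _)
      have heq : ∀ z, z ≠ a j → f z = f₁ z := by
        intro z hz
        by_contra hc
        exact hz ((hxu z hc).trans hxa.symm)
      refine ⟨j, ?_⟩
      funext z
      by_cases hz : z = a j
      · subst hz
        rw [Function.update_self]
        refine (hj3 _ ?_).symm
        intro i hi
        have hij : i ≠ j := by
          rintro rfl
          exact hj2 _ hi
        have hne : a i ≠ a j := by
          intro h'
          apply hij
          apply hy
          rw [← ha i, ← ha j, h']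
        exact hne ((hj1 i hij).unique ((heq _ hne).trans (ha i)) hi)
      · rw [Function.update_of_ne hz, heq z hz]
    · rintro ⟨j, rfl⟩
      refine ⟨⟨j, ?_, ?_, ?_⟩, a j, ?_, ?_⟩
      · intro i hij
        have hne : a i ≠ a j := by
          intro h'
          apply hij
          apply hy
          rw [← ha i, ← ha j, h']
        refine ⟨a i, ?_, ?_⟩
        · simp only [Function.update_of_ne hne, ha]
        · intro z hz
          by_cases hzj : z = a j
          · subst hzj
            simp only [Function.update_self] at hz
            exact absurd hz.symm (hy0 i)
          · simp only [Function.update_of_ne hzj] at hz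
            exact hu i z hz
      · intro z hz
        by_cases hzj : z = a j
        · subst hzj
          simp only [Function.update_self] at hz
          exact hy0 j hz.symm
        · simp only [Function.update_of_ne hzj] at hz
          exact hzj (hu j z hz)
      · intro z hz
        by_cases hzj : z = a j
        · subst hzj
          simp only [Function.update_self]
        · simp only [Function.update_of_ne hzj] at hz ⊢
          exact h2 z hz
      · simp only [Function.update_self, ha]
        exact (hy0 j).symm
      · intro z hz
        by_contra hzj
        exact hz (Function.update_of_ne hzj _ _)
  rw [hset, ← Set.image_univ, Set.ncard_image_of_injective _ hinj, Set.ncard_univ]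
  simp
end

section
/- For every f₀ ∈ V₀, every positive integer d, and every fixed d-tuple of addresses (x₁, …, x_d) ∈ (Fin N)^d, the number of functions f₁ ∈ V₁ that are adjacent to f₀ and satisfy f₀(xᵢ) ≠ f₁(xᵢ) for at least one index i is at most d. (This is the quantity ℓ₀ in the adversary-method lower bound: an edge (f₀^{⊗d}, f₁^{⊗d}) is labeled by an address (x₁,…,x_d) of the d-fold database exactly when f₀ and f₁ differ at some coordinate xᵢ.) -/
/-- ℓ₀ bound: for every f₀ ∈ V₀ and every fixed d-tuple of addresses
(x₁, …, x_d), at most d functions f₁ ∈ V₁ are adjacent to f₀ and differ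
from f₀ at some coordinate xᵢ. -/
theorem ell0_bound (N k : ℕ) (hN : 0 < N) (hk : 0 < k) (hkN : k ≤ N)
    (B : Type) [Fintype B] [DecidableEq B] [Zero B]
    (y : Fin k → B) (hy : Function.Injective y) (hy0 : ∀ i, y i ≠ 0)
    (f₀ : Fin N → B)
    (hf₀ : ∃ j : Fin k,
        (∀ i : Fin k, i ≠ j → ∃! x : Fin N, f₀ x = y i) ∧
        (∀ x : Fin N, f₀ x ≠ y j) ∧
        (∀ x : Fin N, (∀ i : Fin k, f₀ x ≠ y i) → f₀ x = 0))
    (d : ℕ) (hd : 0 < d) (x : Fin d → Fin N) :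
    {f₁ : Fin N → B |
        ((∀ i : Fin k, ∃! a : Fin N, f₁ a = y i) ∧
          (∀ a : Fin N, (∀ i : Fin k, f₁ a ≠ y i) → f₁ a = 0)) ∧
        (∃! a : Fin N, f₀ a ≠ f₁ a) ∧
        (∃ i : Fin d, f₀ (x i) ≠ f₁ (x i))}.ncard ≤ d := by
  obtain ⟨j, -, hj, -⟩ := hf₀
  have hsub : {f₁ : Fin N → B |
        ((∀ i : Fin k, ∃! a : Fin N, f₁ a = y i) ∧
          (∀ a : Fin N, (∀ i : Fin k, f₁ a ≠ y i) → f₁ a = 0)) ∧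
        (∃! a : Fin N, f₀ a ≠ f₁ a) ∧
        (∃ i : Fin d, f₀ (x i) ≠ f₁ (x i))} ⊆
      (fun i : Fin d => Function.update f₀ (x i) (y j)) '' Set.univ := by
    rintro f₁ ⟨⟨h1, -⟩, hu, i, hi⟩
    refine ⟨i, Set.mem_univ _, ?_⟩
    obtain ⟨a, ha, -⟩ := h1 j
    have hxa : a = x i := hu.unique (by rw [ha]; exact hj a) hi
    funext b
    by_cases hb : b = x i
    · subst hb
      rw [hxa] at ha
      simp [ha]
    · simp only [Function.update_of_ne hb]
      by_contra h
      exact hb (hu.unique h hi)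
  refine (Set.ncard_le_ncard hsub (Set.toFinite _)).trans ?_
  refine (Set.ncard_image_le (Set.toFinite _)).trans ?_
  simp [Set.ncard_univ]
end

section
/- For every f₁ ∈ V₁, every positive integer d, and every fixed d-tuple of addresses (x₁, …, x_d) ∈ (Fin N)^d, the number of functions f₀ ∈ V₀ that are adjacent to f₁ and satisfy f₀(xᵢ) ≠ f₁(xᵢ) for at least one index i is at most min{d, k}. (This is the quantity ℓ₁ in the adversary-method lower bound: an edge (f₀^{⊗d}, f₁^{⊗d}) is labeled by an address (x₁,…,x_d) of the d-fold database exactly when f₀ and f₁ differ at some coordinate xᵢ.) -/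
/-- ℓ₁ bound: for every f₁ ∈ V₁ and every fixed d-tuple of addresses
(x₁, …, x_d), at most min {d, k} functions f₀ ∈ V₀ are adjacent to f₁ and
differ from f₁ at some coordinate xᵢ. -/
theorem ell1_bound (N k : ℕ) (hN : 0 < N) (hk : 0 < k) (hkN : k ≤ N)
    (B : Type) [Fintype B] [DecidableEq B] [Zero B]
    (y : Fin k → B) (hy : Function.Injective y) (hy0 : ∀ i, y i ≠ 0)
    (f₁ : Fin N → B)
    (hf₁ : (∀ i : Fin k, ∃! a : Fin N, f₁ a = y i) ∧
        (∀ a : Fin N, (∀ i : Fin k, f₁ a ≠ y i) → f₁ a = 0))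
    (d : ℕ) (hd : 0 < d) (x : Fin d → Fin N) :
    {f₀ : Fin N → B |
        (∃ j : Fin k,
          (∀ i : Fin k, i ≠ j → ∃! a : Fin N, f₀ a = y i) ∧
          (∀ a : Fin N, f₀ a ≠ y j) ∧
          (∀ a : Fin N, (∀ i : Fin k, f₀ a ≠ y i) → f₀ a = 0)) ∧
        (∃! a : Fin N, f₀ a ≠ f₁ a) ∧
        (∃ i : Fin d, f₀ (x i) ≠ f₁ (x i))}.ncard ≤ min d k := by
  have hr : ∀ (n : ℕ) (F : Fin n → (Fin N → B)), (Set.range F).ncard ≤ n := by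
    intro n F
    rw [← Set.image_univ]
    refine (Set.ncard_image_le (Set.toFinite _)).trans ?_
    simp [Set.ncard_univ]
  choose g hg hgu using hf₁.1
  have key : ∀ f₀ : Fin N → B, (∃ j : Fin k,
          (∀ i : Fin k, i ≠ j → ∃! a : Fin N, f₀ a = y i) ∧
          (∀ a : Fin N, f₀ a ≠ y j) ∧
          (∀ a : Fin N, (∀ i : Fin k, f₀ a ≠ y i) → f₀ a = 0)) →
        (∃! a : Fin N, f₀ a ≠ f₁ a) →
        ∃ j, f₀ = Function.update f₁ (g j) 0 ∧ ∀ b, f₀ b ≠ f₁ b → b = g j := by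
    rintro f₀ ⟨j, h1, h2, h3⟩ ⟨a, ha, hau⟩
    have hne : f₀ (g j) ≠ f₁ (g j) := by
      rw [hg j]
      exact h2 _
    have hga : g j = a := hau _ hne
    have hb : ∀ b, f₀ b ≠ f₁ b → b = g j := fun b h => (hau b h).trans hga.symm
    refine ⟨j, ?_, hb⟩
    have h0 : f₀ (g j) = 0 := by
      apply h3
      intro i hi
      by_cases hij : i = j
      · subst hij
        exact h2 _ hi
      · have hgij : g i ≠ g j := by
          intro h
          apply hij
          apply hy
          rw [← hg i, ← hg j, h]
        have : f₀ (g i) = y i := by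
          by_contra hc
          exact hgij (hb _ (by rw [hg i]; exact hc))
        exact hgij ((h1 i hij).unique this hi)
    funext b
    by_cases hbj : b = g j
    · subst hbj
      simp [h0]
    · rw [Function.update_of_ne hbj]
      by_contra hc
      exact hbj (hb b hc)
  refine le_min ?_ ?_
  · refine (Set.ncard_le_ncard ?_ (Set.toFinite _)).trans
      (hr d (fun i => Function.update f₁ (x i) 0))
    rintro f₀ ⟨hV, hA, i, hi⟩
    obtain ⟨j, hj, hb⟩ := key f₀ hV hA
    refine ⟨i, ?_⟩
    simp only
    rw [hb _ hi, hj]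
  · refine (Set.ncard_le_ncard ?_ (Set.toFinite _)).trans
      (hr k (fun i => Function.update f₁ (g i) 0))
    rintro f₀ ⟨hV, hA, -⟩
    obtain ⟨j, hj, hb⟩ := key f₀ hV hA
    exact ⟨j, hj.symm⟩
end

section
/- There exists a constant d₀ such that for all integers d ≥ d₀ and all integers k with d < k ≤ d · log₂ d, setting t = ⌈5 k log₂ d / d⌉, one has C(k, t) · (1/d)^t ≤ 1/d³, where C(k, t) is the binomial coefficient (equal to 0 when t > k). -/
/-- There is a constant d₀ such that for all d ≥ d₀ and all integers k with
d < k ≤ d·log₂ d, with t = ⌈5 k log₂ d / d⌉ one has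
C(k, t) · (1/d)^t ≤ 1/d³. -/
theorem choose_bound_medium_k :
    ∃ d₀ : ℕ, ∀ d k : ℕ, d₀ ≤ d → d < k → (k : ℝ) ≤ (d : ℝ) * Real.logb 2 d →
      (k.choose ⌈(5 : ℝ) * k * Real.logb 2 d / d⌉₊ : ℝ) *
          (1 / d) ^ ⌈(5 : ℝ) * k * Real.logb 2 d / d⌉₊
        ≤ 1 / (d : ℝ) ^ 3 := by
  refine ⟨4, fun d k hd hk _ => ?_⟩
  have hd4 : (4 : ℝ) ≤ d := by exact_mod_cast hd
  have hd0 : (0 : ℝ) < d := by linarith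
  have hkd : (d : ℝ) < k := by exact_mod_cast hk
  have hL : 2 ≤ Real.logb 2 (d : ℝ) := by
    rw [Real.le_logb_iff_rpow_le (by norm_num) hd0]
    norm_num
    exact hd
  have hdL : (2 : ℝ) ^ (Real.logb 2 (d : ℝ)) = d :=
    Real.rpow_logb (by norm_num) (by norm_num) hd0
  set L := Real.logb 2 (d : ℝ) with hLdef
  have ht := Nat.le_ceil ((5 : ℝ) * k * L / d)
  set t := ⌈(5 : ℝ) * k * L / d⌉₊ with htdef
  have hq : (1 : ℝ) ≤ k / d := by rw [le_div_iff₀ hd0]; linarith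
  have e1 : (5 : ℝ) * k * L / d = 5 * L * (k / d) := by ring
  rw [e1] at ht
  have h3 : 3 * L ≤ t := by nlinarith
  have h10 : (k : ℝ) / d ≤ t / 10 := by nlinarith
  have hexp : Real.exp t = Real.exp 1 ^ t := by rw [← Real.exp_nat_mul, mul_one]
  have hpow : (d : ℝ) ^ 3 ≤ 2 ^ t := by
    calc (d : ℝ) ^ 3 = (2 : ℝ) ^ (3 * L) := by
          rw [mul_comm, Real.rpow_mul (by norm_num), hdL]; norm_cast
      _ ≤ (2 : ℝ) ^ (t : ℝ) := Real.rpow_le_rpow_of_exponent_le (by norm_num) h3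
      _ = 2 ^ t := Real.rpow_natCast _ _
  calc (k.choose t : ℝ) * (1 / d) ^ t ≤ ((k : ℝ) ^ t / t.factorial) * (1 / d) ^ t := by
        gcongr
        exact Nat.choose_le_pow_div t k
    _ = (k / d : ℝ) ^ t / t.factorial := by rw [div_pow, div_pow, one_pow]; ring
    _ ≤ (t / 10 : ℝ) ^ t / t.factorial := by gcongr
    _ = ((t : ℝ) ^ t / t.factorial) * (1 / 10) ^ t := by rw [div_pow, div_pow, one_pow]; ring
    _ ≤ Real.exp t * (1 / 10) ^ t := by
        gcongr
        exact Real.pow_div_factorial_le_exp _ (by positivity) t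
    _ = (Real.exp 1 * (1 / 10)) ^ t := by rw [hexp, mul_pow]
    _ ≤ (1 / 2) ^ t := by
        have := Real.exp_one_lt_d9
        gcongr
        linarith
    _ = 1 / 2 ^ t := by rw [div_pow, one_pow]
    _ ≤ 1 / (d : ℝ) ^ 3 := by gcongr
end
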